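/- Topological completeness of S4DS: for every bimodal formula A, A ∈ S4DS if and only if A is valid in every dense-in-itself topological space (a space with no isolated points). -/

import Mathlib

/-!
Soundness is an induction on derivations; (DS) holds because in a dense-in-itself space every
neighbourhood of a point contains another point.

For completeness, the axioms make the canonical frame of S4DS an S4D-frame that is also a DS-frame,
so a non-theorem is refuted at some point `w₀` of such a frame `(W, R, R_D)`. Distinct points of
the cluster `{w₀} ∪ R_D(w₀)` are `R_D`-related, so on it `R_D` differs from `≠` only at the
`R_D`-reflexive points; doubling each of these turns `R_D` into inequality. Give the doubled cluster
the topology induced by its projection to `W` from the Alexandrov topology of `R`. The projection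
then preserves truth. No singleton is open: an `R_D`-reflexive point is inseparable from its copy,
and an `R_D`-irreflexive one has a proper `R`-successor in each of its neighbourhoods.
-/

/-- Bimodal formulas: propositional letters, falsum, implication, box, and
the difference modality `[≠]` (called `dbox` here). -/
inductive BForm : Type
  | var : ℕ → BForm
  | bot : BForm
  | imp : BForm → BForm → BForm
  | box : BForm → BForm
  | dbox : BForm → BForm
  deriving DecidableEq

namespace BForm

/-- Classical negation. -/
def neg (A : BForm) : BForm := imp A bot

/-- Classical conjunction. -/
def conj (A B : BForm) : BForm := neg (imp A (neg B))

/-- `◇A = ¬□¬A`. -/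
def dia (A : BForm) : BForm := neg (box (neg A))

/-- `⟨≠⟩A = ¬[≠]¬A`. -/
def ddia (A : BForm) : BForm := neg (dbox (neg A))

end BForm

/-- Truth at a point of a Kripke model over a frame `(W, R, R_D)`. -/
def ksat {W : Type} (R RD : W → W → Prop) (θ : ℕ → Set W) : W → BForm → Prop
  | x, .var n => x ∈ θ n
  | _, .bot => False
  | x, .imp A B => ksat R RD θ x A → ksat R RD θ x B
  | x, .box A => ∀ y, R x y → ksat R RD θ y A
  | x, .dbox A => ∀ y, RD x y → ksat R RD θ y A

/-- Validity in a Kripke frame: truth at every point under every valuation. -/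
def kvalid {W : Type} (R RD : W → W → Prop) (A : BForm) : Prop :=
  ∀ (θ : ℕ → Set W) (x : W), ksat R RD θ x A

/-- Truth at a point of a topological model. -/
def tsat {X : Type} [TopologicalSpace X] (θ : ℕ → Set X) : X → BForm → Prop
  | x, .var n => x ∈ θ n
  | _, .bot => False
  | x, .imp A B => tsat θ x A → tsat θ x B
  | x, .box A => ∃ U : Set X, IsOpen U ∧ x ∈ U ∧ ∀ y ∈ U, tsat θ y A
  | x, .dbox A => ∀ y, y ≠ x → tsat θ y A

/-- Validity in a topological space. -/
def tvalid (X : Type) [TopologicalSpace X] (A : BForm) : Prop :=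
  ∀ (θ : ℕ → Set X) (x : X), tsat θ x A

/-- Uniform substitution of formulas for propositional letters. -/
def substF (σ : ℕ → BForm) : BForm → BForm
  | .var n => σ n
  | .bot => .bot
  | .imp A B => .imp (substF σ A) (substF σ B)
  | .box A => .box (substF σ A)
  | .dbox A => .dbox (substF σ A)

/-- Boolean evaluation of a formula, treating letters and modal formulas as atoms. -/
def beval (v : BForm → Bool) : BForm → Bool
  | .var n => v (.var n)
  | .bot => false
  | .imp A B => !(beval v A) || beval v B
  | .box A => v (.box A)
  | .dbox A => v (.dbox A)

/-- A classical tautology of the bimodal language. -/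
def Tautology (A : BForm) : Prop := ∀ v : BForm → Bool, beval v A = true

/-- The letter `p`. -/
def pLet : BForm := .var 0
/-- The letter `q`. -/
def qLet : BForm := .var 1

/-- The least bimodal logic containing `K₂`, the S4D axioms and the extra axioms `Ax`,
closed under modus ponens, uniform substitution, and both necessitation rules. -/
inductive Logic (Ax : Set BForm) : BForm → Prop
  | taut {A : BForm} : Tautology A → Logic Ax A
  | axKBox : Logic Ax (.imp (.box (.imp pLet qLet)) (.imp (.box pLet) (.box qLet)))
  | axKD : Logic Ax (.imp (.dbox (.imp pLet qLet)) (.imp (.dbox pLet) (.dbox qLet)))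
  | axBD : Logic Ax (.imp pLet (.dbox (BForm.ddia pLet)))
  | ax4mD : Logic Ax (.imp (BForm.conj pLet (.dbox pLet)) (.dbox (.dbox pLet)))
  | axTBox : Logic Ax (.imp (.box pLet) pLet)
  | ax4Box : Logic Ax (.imp (.box pLet) (.box (.box pLet)))
  | axDBox : Logic Ax (.imp (BForm.conj (.dbox pLet) pLet) (.box pLet))
  | extra {A : BForm} : A ∈ Ax → Logic Ax A
  | mp {A B : BForm} : Logic Ax (.imp A B) → Logic Ax A → Logic Ax B
  | subst {A : BForm} (σ : ℕ → BForm) : Logic Ax A → Logic Ax (substF σ A)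
  | necBox {A : BForm} : Logic Ax A → Logic Ax (.box A)
  | necD {A : BForm} : Logic Ax A → Logic Ax (.dbox A)

/-- The axiom (DS): `[≠]p → ◇p`. -/
def dsAx : BForm := .imp (.dbox pLet) (BForm.dia pLet)

/-- The axiom (AT₁): `[≠]p → [≠]□p`. -/
def at1Ax : BForm := .imp (.dbox pLet) (.dbox (.box pLet))

/-- The logic S4D. -/
def S4D : BForm → Prop := Logic ∅

/-- The logic S4DS = S4D + (DS). -/
def S4DS : BForm → Prop := Logic {dsAx}

/-- The logic S4DT1S = S4DS + (AT₁). -/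
def S4DT1S : BForm → Prop := Logic {dsAx, at1Ax}

/-- `(W, R, R_D)` is an S4D-frame: `R` is reflexive and transitive, `R_D` is
symmetric and pseudo-transitive, and `R ⊆ R_D ∪ Id`. -/
structure IsS4DFrame {W : Type} (R RD : W → W → Prop) : Prop where
  refl : ∀ x, R x x
  trans : ∀ ⦃x y z⦄, R x y → R y z → R x z
  symm : ∀ ⦃x y⦄, RD x y → RD y x
  ptrans : ∀ ⦃x y z⦄, RD x y → RD y z → x ≠ z → RD x z
  inc : ∀ ⦃x y⦄, R x y → RD x y ∨ x = y

/-- A T₁-frame: every `R_D`-irreflexive point is `R`-minimal. -/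
def IsT1Frame {W : Type} (R RD : W → W → Prop) : Prop :=
  ∀ x, ¬ RD x x → ∀ y, R y x → y = x

/-- A DS-frame: every `R_D`-irreflexive point has an `R`-successor distinct from itself. -/
def IsDSFrame {W : Type} (R RD : W → W → Prop) : Prop :=
  ∀ x, ¬ RD x x → ∃ y, y ≠ x ∧ R x y

/-- A cd-p-morphism from a topological space `X` onto a Kripke frame `(W, R, R_D)`. -/
structure IsCdPMorphism {X : Type} [TopologicalSpace X] {W : Type}
    (R RD : W → W → Prop) (f : X → W) : Prop where
  surj : Function.Surjective f
  cl : ∀ w : W, closure (f ⁻¹' {w}) = f ⁻¹' {v | R v w}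
  diff : ∀ w : W, {x : X | ∃ y, y ≠ x ∧ f y = w} = f ⁻¹' {v | RD v w}

/-- A p-morphism between Kripke frames. -/
structure IsPMorphism {W W' : Type} (R RD : W → W → Prop) (R' RD' : W' → W' → Prop)
    (f : W → W') : Prop where
  surj : Function.Surjective f
  forth : ∀ ⦃x y⦄, R x y → R' (f x) (f y)
  forthD : ∀ ⦃x y⦄, RD x y → RD' (f x) (f y)
  back : ∀ x z, R' (f x) z → ∃ y, R x y ∧ f y = z
  backD : ∀ x z, RD' (f x) z → ∃ y, RD x y ∧ f y = z

/-- The Alexandrov topology on `W` whose open sets are the `R`-upward-closed sets. -/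
def alexandrov {W : Type} (R : W → W → Prop) : TopologicalSpace W where
  IsOpen U := ∀ ⦃x⦄, x ∈ U → ∀ ⦃y⦄, R x y → y ∈ U
  isOpen_univ := fun _ _ _ _ => trivial
  isOpen_inter := fun _ _ hU hV x hx y hxy => ⟨hU hx.1 hxy, hV hx.2 hxy⟩
  isOpen_sUnion := fun _ hS x hx y hxy => by
    obtain ⟨U, hU, hxU⟩ := hx
    exact ⟨U, hU, hS U hU hxU hxy⟩

open Filter Set
open scoped Topology

/-! ### Soundness -/

section Topological

variable {X : Type} [TopologicalSpace X] {θ : ℕ → Set X} {x : X} {A B : BForm}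

theorem tsat_box_iff : tsat θ x (.box A) ↔ ∀ᶠ y in 𝓝 x, tsat θ y A := by
  simp only [tsat, eventually_nhds_iff]
  exact exists_congr fun U => by tauto

theorem tsat_conj_iff : tsat θ x (.conj A B) ↔ tsat θ x A ∧ tsat θ x B := by
  simp only [BForm.conj, BForm.neg, tsat]
  tauto

theorem forall_tsat_of_tsat_dbox (hA : tsat θ x A) (hd : tsat θ x (.dbox A)) (y : X) :
    tsat θ y A := by
  rcases eq_or_ne y x with rfl | hne
  exacts [hA, hd y hne]

theorem tsat_substF (σ : ℕ → BForm) :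
    tsat θ x (substF σ A) ↔ tsat (fun n => {y | tsat θ y (σ n)}) x A := by
  induction A generalizing x with
  | var n => exact Iff.rfl
  | bot => exact Iff.rfl
  | imp A B ihA ihB => exact imp_congr ihA ihB
  | box A ih => simp only [substF, tsat, ih]
  | dbox A ih => simp only [substF, tsat, ih]

open Classical in
theorem beval_tsat : beval (fun B => decide (tsat θ x B)) A = true ↔ tsat θ x A := by
  induction A with
  | imp A B ihA ihB => simp [beval, tsat, ← ihA, ← ihB, imp_iff_not_or]
  | bot => simp [beval, tsat]
  | _ => simp [beval]

theorem Tautology.tvalid (h : Tautology A) : tvalid X A :=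
  fun _ _ => beval_tsat.1 (h _)

theorem Logic.tvalid {Ax : Set BForm} (hAx : ∀ B ∈ Ax, tvalid X B) (h : Logic Ax A) :
    tvalid X A := by
  induction h with
  | taut h => exact h.tvalid
  | axKBox =>
    intro θ x himp hp
    rw [tsat_box_iff] at himp hp ⊢
    exact himp.mp (hp.mono fun y hy himp => himp hy)
  | axKD => exact fun θ x himp hp y hy => himp y hy (hp y hy)
  | axBD => exact fun θ x hp y hy hn => hn x hy.symm hp
  | ax4mD =>
    intro θ x h y _ z _
    obtain ⟨hp, hd⟩ := tsat_conj_iff.1 h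
    exact forall_tsat_of_tsat_dbox hp hd z
  | axTBox => exact fun θ x h => (tsat_box_iff.1 h).self_of_nhds
  | ax4Box =>
    intro θ x h
    simp only [tsat_box_iff] at h ⊢
    exact eventually_eventually_nhds.2 h
  | axDBox =>
    intro θ x h
    obtain ⟨hd, hp⟩ := tsat_conj_iff.1 h
    exact tsat_box_iff.2 (.of_forall (forall_tsat_of_tsat_dbox hp hd))
  | extra hA => exact hAx _ hA
  | mp _ _ ihimp ih => exact fun θ x => ihimp θ x (ih θ x)
  | subst σ _ ih => exact fun θ x => (tsat_substF σ).2 (ih _ x)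
  | necBox _ ih => exact fun θ x => tsat_box_iff.2 (.of_forall (ih θ))
  | necD _ ih => exact fun θ x y _ => ih θ y

theorem tvalid_dsAx (hX : ∀ x : X, ¬ IsOpen ({x} : Set X)) : tvalid X dsAx := by
  intro θ x hd hbox
  refine hX x ((isOpen_singleton_iff_nhds_eq_pure x).2 ((pure_le_nhds x).antisymm' ?_))
  refine le_pure_iff.2 ((tsat_box_iff.1 hbox).mono fun y hy => ?_)
  by_contra hne
  exact hy (hd y hne)

end Topological

/-! ### Derivability from hypotheses -/

section Derivability

variable {Ax Γ Δ : Set BForm} {A B C : BForm} {v : BForm → Bool}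

theorem beval_imp_iff : beval v (.imp A B) = true ↔ (beval v A = true → beval v B = true) := by
  simp [beval, imp_iff_not_or]

theorem beval_neg_iff : beval v (.neg A) = true ↔ ¬ beval v A = true := by
  simp [BForm.neg, beval]

theorem beval_conj_iff :
    beval v (.conj A B) = true ↔ beval v A = true ∧ beval v B = true := by
  simp [BForm.conj, BForm.neg, beval]

/-- Derivability in `Logic Ax` from a set of hypotheses, the local consequence relation:
necessitation and substitution apply to theorems but not to hypotheses. -/
inductive Derives (Ax Γ : Set BForm) : BForm → Prop
  | thm {A : BForm} : Logic Ax A → Derives Ax Γ A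
  | hyp {A : BForm} : A ∈ Γ → Derives Ax Γ A
  | mp {A B : BForm} : Derives Ax Γ (.imp A B) → Derives Ax Γ A → Derives Ax Γ B

namespace Derives

theorem of_beval (h : ∀ v, beval v A = true) : Derives Ax Γ A :=
  .thm (.taut h)

theorem map_of_beval (h : ∀ v, beval v A = true → beval v B = true) (hA : Derives Ax Γ A) :
    Derives Ax Γ B :=
  .mp (of_beval fun v => beval_imp_iff.2 (h v)) hA

theorem map₂_of_beval (h : ∀ v, beval v A = true → beval v B = true → beval v C = true)
    (hA : Derives Ax Γ A) (hB : Derives Ax Γ B) : Derives Ax Γ C :=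
  .mp (hA.map_of_beval fun v hv => beval_imp_iff.2 (h v hv)) hB

theorem of_bot (h : Derives Ax Γ .bot) : Derives Ax Γ A :=
  h.map_of_beval fun _ hbot => by simp [beval] at hbot

theorem mono (hΓΔ : Γ ⊆ Δ) (h : Derives Ax Γ A) : Derives Ax Δ A := by
  induction h with
  | thm h => exact .thm h
  | hyp h => exact .hyp (hΓΔ h)
  | mp _ _ ihimp ih => exact .mp ihimp ih

theorem const_imp (h : Derives Ax Γ B) : Derives Ax Γ (.imp A B) :=
  h.map_of_beval fun _ hB => beval_imp_iff.2 fun _ => hB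

theorem deduction (h : Derives Ax (insert A Γ) B) : Derives Ax Γ (.imp A B) := by
  induction h with
  | thm h => exact const_imp (.thm h)
  | hyp h =>
    rcases h with rfl | h
    · exact of_beval fun v => beval_imp_iff.2 id
    · exact const_imp (.hyp h)
  | mp _ _ ihimp ih =>
    refine map₂_of_beval (fun v => ?_) ihimp ih
    simp only [beval_imp_iff]
    tauto

theorem of_insert_of_insert_neg (h : Derives Ax (insert A Γ) B)
    (hneg : Derives Ax (insert A.neg Γ) B) : Derives Ax Γ B := by
  refine map₂_of_beval (fun v => ?_) h.deduction hneg.deduction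
  simp only [beval_imp_iff, beval_neg_iff]
  tauto

theorem exists_of_sUnion {c : Set (Set BForm)} (hc : IsChain (· ⊆ ·) c) (hne : c.Nonempty)
    (h : Derives Ax (⋃₀ c) A) : ∃ Γ ∈ c, Derives Ax Γ A := by
  induction h with
  | thm h =>
    obtain ⟨Γ, hΓ⟩ := hne
    exact ⟨Γ, hΓ, .thm h⟩
  | hyp h =>
    obtain ⟨Γ, hΓ, h⟩ := h
    exact ⟨Γ, hΓ, .hyp h⟩
  | mp _ _ ihimp ih =>
    obtain ⟨Γ, hΓ, himp⟩ := ihimp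
    obtain ⟨Δ, hΔ, h⟩ := ih
    rcases hc.total hΓ hΔ with hs | hs
    · exact ⟨Δ, hΔ, .mp (himp.mono hs) h⟩
    · exact ⟨Γ, hΓ, .mp himp (h.mono hs)⟩

theorem exists_interpolant_of_union (h : Derives Ax (Γ ∪ Δ) C) :
    ∃ A, Derives Ax Γ A ∧ Derives Ax Δ (.imp A C) := by
  have verum : Derives Ax Γ (.imp .bot .bot) := of_beval fun v => beval_imp_iff.2 id
  induction h with
  | thm h => exact ⟨_, verum, const_imp (.thm h)⟩
  | @hyp C h =>
    rcases h with h | h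
    · exact ⟨C, .hyp h, of_beval fun v => beval_imp_iff.2 id⟩
    · exact ⟨_, verum, const_imp (.hyp h)⟩
  | mp _ _ ihimp ih =>
    obtain ⟨A, hA, hAimp⟩ := ihimp
    obtain ⟨B, hB, hBimp⟩ := ih
    refine ⟨.conj A B, map₂_of_beval (fun v hA hB => beval_conj_iff.2 ⟨hA, hB⟩) hA hB,
      map₂_of_beval (fun v => ?_) hAimp hBimp⟩
    simp only [beval_imp_iff, beval_conj_iff]
    tauto

theorem logic_of_empty (h : Derives Ax ∅ A) : Logic Ax A := by
  induction h with
  | thm h => exact h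
  | hyp h => exact h.elim
  | mp _ _ ihimp ih => exact .mp ihimp ih

end Derives

end Derivability

/-! ### Maximal consistent sets -/

/-- Maximal consistent sets of `Logic Ax`, the points of its canonical frame. Maximality is
encoded as containing every formula or its negation. -/
structure MaximalConsistentSet (Ax : Set BForm) where
  carrier : Set BForm
  consistent : ¬ Derives Ax carrier .bot
  total : ∀ A, A ∈ carrier ∨ A.neg ∈ carrier

namespace MaximalConsistentSet

variable {Ax Γ : Set BForm} {A B : BForm}

instance : SetLike (MaximalConsistentSet Ax) BForm where
  coe := carrier
  coe_injective := by rintro ⟨⟩ ⟨⟩ rfl; rfl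

variable {x y : MaximalConsistentSet Ax}

theorem mem_of_derives (h : Derives Ax x A) : A ∈ x :=
  (x.total A).resolve_right fun hneg => x.consistent (.mp (.hyp hneg) h)

theorem mem_of_imp_mem (himp : .imp A B ∈ x) (hA : A ∈ x) : B ∈ x :=
  mem_of_derives (.mp (.hyp himp) (.hyp hA))

theorem mem_of_logic_imp (h : Logic Ax (.imp A B)) (hA : A ∈ x) : B ∈ x :=
  mem_of_imp_mem (mem_of_derives (.thm h)) hA

theorem bot_notMem : .bot ∉ x := fun h => x.consistent (.hyp h)

theorem neg_mem_iff : A.neg ∈ x ↔ A ∉ x :=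
  ⟨fun hneg hA => bot_notMem (mem_of_imp_mem hneg hA), (x.total A).resolve_left⟩

theorem imp_mem_iff : .imp A B ∈ x ↔ (A ∈ x → B ∈ x) := by
  refine ⟨mem_of_imp_mem, fun h => mem_of_derives ?_⟩
  by_cases hA : A ∈ x
  · exact .const_imp (.hyp (h hA))
  · refine (Derives.hyp (neg_mem_iff.2 hA)).map_of_beval fun v => ?_
    simp only [beval_neg_iff, beval_imp_iff]
    tauto

theorem conj_mem_iff : A.conj B ∈ x ↔ A ∈ x ∧ B ∈ x := by
  rw [BForm.conj, neg_mem_iff, imp_mem_iff, neg_mem_iff]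
  tauto

theorem exists_mem_notMem_of_ne (hne : x ≠ y) : ∃ A ∈ x, A ∉ y := by
  by_contra! hsub
  refine hne (SetLike.ext fun A => ⟨hsub A, fun hA => ?_⟩)
  by_contra hn
  exact neg_mem_iff.1 (hsub _ (neg_mem_iff.2 hn)) hA

theorem exists_superset_notMem (h : ¬ Derives Ax Γ A) :
    ∃ x : MaximalConsistentSet Ax, Γ ⊆ x ∧ A ∉ x := by
  obtain ⟨Δ, hΓΔ, hΔ⟩ := zorn_subset_nonempty {Δ | ¬ Derives Ax Δ A}
    (fun c hc hchain hne => ⟨⋃₀ c, fun hA => by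
      obtain ⟨Δ, hΔ, hA⟩ := hA.exists_of_sUnion hchain hne
      exact hc hΔ hA, fun _ => subset_sUnion_of_mem⟩) Γ h
  have derives_insert {B : BForm} (hB : B ∉ Δ) : Derives Ax (insert B Δ) A :=
    by_contra fun hn => hB (hΔ.le_of_ge hn (subset_insert B Δ) (mem_insert B Δ))
  refine ⟨⟨Δ, fun hbot => hΔ.prop hbot.of_bot, fun B => ?_⟩, hΓΔ, fun hA => hΔ.prop (.hyp hA)⟩
  by_contra! hB
  exact hΔ.prop (.of_insert_of_insert_neg (derives_insert hB.1) (derives_insert hB.2))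

end MaximalConsistentSet

open MaximalConsistentSet

/-! ### The canonical frame -/

section Canonical

variable {Ax : Set BForm} {m n : BForm → BForm} {x y z : MaximalConsistentSet Ax}
  {A B : BForm}

/-- `m` is a normal modality of `Logic Ax`; `□` and `[≠]` are treated at once through this
notion. -/
structure IsNormalModality (Ax : Set BForm) (m : BForm → BForm) : Prop where
  nec : ∀ {A}, Logic Ax A → Logic Ax (m A)
  distrib : ∀ A B, Logic Ax (.imp (m (.imp A B)) (.imp (m A) (m B)))

/-- The substitution `p ↦ A`, `q ↦ B`. -/
def letterSubst (A B : BForm) : ℕ → BForm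
  | 0 => A
  | _ + 1 => B

theorem isNormalModality_box : IsNormalModality Ax .box where
  nec := .necBox
  distrib A B := .subst (letterSubst A B) .axKBox

theorem isNormalModality_dbox : IsNormalModality Ax .dbox where
  nec := .necD
  distrib A B := .subst (letterSubst A B) .axKD

/-- The canonical accessibility relation of the modality `m`. -/
def canonicalRel (m : BForm → BForm) (x y : MaximalConsistentSet Ax) : Prop :=
  ∀ A, m A ∈ x → A ∈ y

namespace IsNormalModality

theorem mem_of_derives (hm : IsNormalModality Ax m) (h : Derives Ax {B | m B ∈ x} A) :
    m A ∈ x := by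
  induction h with
  | thm h => exact MaximalConsistentSet.mem_of_derives (.thm (hm.nec h))
  | hyp h => exact h
  | mp _ _ ihimp ih => exact mem_of_imp_mem (mem_of_logic_imp (hm.distrib _ _) ihimp) ih

theorem mem_of_beval_imp (hm : IsNormalModality Ax m) (h : ∀ v, beval v A = true → beval v B = true)
    (hA : m A ∈ x) : m B ∈ x :=
  hm.mem_of_derives (Derives.map_of_beval h (.hyp hA))

theorem mem_iff_forall_canonicalRel (hm : IsNormalModality Ax m) :
    m A ∈ x ↔ ∀ y, canonicalRel m x y → A ∈ y := by
  refine ⟨fun hA y hxy => hxy A hA, fun h => ?_⟩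
  by_contra hn
  obtain ⟨y, hxy, hAy⟩ := exists_superset_notMem fun hd => hn (hm.mem_of_derives hd)
  exact hAy (h y fun _ hB => hxy hB)

theorem exists_canonicalRel_and_canonicalRel (hm : IsNormalModality Ax m)
    (hn : IsNormalModality Ax n) (h : ∀ A, m A ∈ x → n A.neg ∉ x) :
    ∃ y, canonicalRel m x y ∧ canonicalRel n x y := by
  have hcons : ¬ Derives Ax ({B | m B ∈ x} ∪ {B | n B ∈ x}) .bot := fun hbot => by
    obtain ⟨A, hmA, hnA⟩ := hbot.exists_interpolant_of_union
    exact h A (hm.mem_of_derives hmA) (hn.mem_of_derives hnA)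
  obtain ⟨y, hy, -⟩ := exists_superset_notMem hcons
  exact ⟨y, fun _ hB => hy (.inl hB), fun _ hB => hy (.inr hB)⟩

end IsNormalModality

theorem ksat_canonicalRel_iff :
    ksat (canonicalRel .box) (canonicalRel .dbox) (fun n => {y | .var n ∈ y}) x A ↔ A ∈ x := by
  induction A generalizing x with
  | var n => exact Iff.rfl
  | bot => exact iff_of_false id bot_notMem
  | imp A B ihA ihB => exact (imp_congr ihA ihB).trans imp_mem_iff.symm
  | box A ih => simp only [ksat, ih, isNormalModality_box.mem_iff_forall_canonicalRel]
  | dbox A ih => simp only [ksat, ih, isNormalModality_dbox.mem_iff_forall_canonicalRel]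

theorem Logic.of_kvalid_canonicalRel
    (h : kvalid (canonicalRel (Ax := Ax) .box) (canonicalRel .dbox) A) : Logic Ax A := by
  by_contra hn
  obtain ⟨x, -, hA⟩ := exists_superset_notMem fun hd => hn (Derives.logic_of_empty hd)
  exact hA (ksat_canonicalRel_iff.1 (h _ x))

theorem canonicalRel_dbox_symm (h : canonicalRel .dbox x y) : canonicalRel .dbox y x := by
  intro A hA
  by_contra hn
  have hddia : A.neg.ddia ∈ y :=
    h _ (mem_of_logic_imp (.subst (fun _ => A.neg) .axBD) (neg_mem_iff.2 hn))
  refine neg_mem_iff.1 hddia (isNormalModality_dbox.mem_of_beval_imp (fun v => ?_) hA)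
  simp only [beval_neg_iff]
  tauto

/-- Both pseudo-transitivity (`m = [≠][≠]`) and `R ⊆ R_D ∪ Id` (`m = □`) come from this: given
`[≠]A ∈ x`, a formula `B` separating `x` from `z` gives `A ∨ B`, which holds at `x` as well as at
all other points, hence at `z`. -/
theorem canonicalRel_dbox_of_ne (hm : ∀ A, A ∈ x → .dbox A ∈ x → m A ∈ x)
    (h : canonicalRel m x z) (hne : x ≠ z) : canonicalRel .dbox x z := by
  intro A hA
  obtain ⟨B, hBx, hBz⟩ := exists_mem_notMem_of_ne hne
  have hor : .imp A.neg B ∈ z := by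
    refine h _ (hm _ (imp_mem_iff.2 fun _ => hBx)
      (isNormalModality_dbox.mem_of_beval_imp (fun v => ?_) hA))
    simp only [beval_imp_iff, beval_neg_iff]
    tauto
  by_contra hn
  exact hBz (mem_of_imp_mem hor (neg_mem_iff.2 hn))

theorem isS4DFrame_canonicalRel :
    IsS4DFrame (canonicalRel (Ax := Ax) .box) (canonicalRel .dbox) where
  refl _ A := mem_of_logic_imp (.subst (fun _ => A) .axTBox)
  trans _ _ _ hxy hyz A hA := hyz A (hxy _ (mem_of_logic_imp (.subst (fun _ => A) .ax4Box) hA))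
  symm _ _ := canonicalRel_dbox_symm
  ptrans _ _ _ hxy hyz := canonicalRel_dbox_of_ne (m := fun A => .dbox (.dbox A))
    (fun A hA hd => mem_of_logic_imp (.subst (fun _ => A) .ax4mD) (conj_mem_iff.2 ⟨hA, hd⟩))
    (fun A hA => hyz A (hxy _ hA))
  inc _ _ hxy := or_iff_not_imp_right.2 <| canonicalRel_dbox_of_ne
    (fun A hA hd => mem_of_logic_imp (.subst (fun _ => A) .axDBox) (conj_mem_iff.2 ⟨hd, hA⟩)) hxy

theorem isDSFrame_canonicalRel (hAx : dsAx ∈ Ax) :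
    IsDSFrame (canonicalRel (Ax := Ax) .box) (canonicalRel .dbox) := by
  intro x hx
  obtain ⟨y, hRD, hR⟩ :=
    isNormalModality_dbox.exists_canonicalRel_and_canonicalRel isNormalModality_box fun A hA =>
      neg_mem_iff.1 (mem_of_logic_imp (x := x) (.subst (fun _ => A) (.extra hAx)) hA)
  exact ⟨y, fun hyx => hx (hyx ▸ hRD), hR⟩

end Canonical

theorem s4ds_of_forall_kvalid {A : BForm}
    (h : ∀ (W : Type) (R RD : W → W → Prop), IsS4DFrame R RD → IsDSFrame R RD → kvalid R RD A) :
    S4DS A :=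
  Logic.of_kvalid_canonicalRel
    (h _ _ _ isS4DFrame_canonicalRel (isDSFrame_canonicalRel (mem_singleton dsAx)))

/-! ### From frames to spaces -/

section Transfer

variable {W X : Type} {R RD : W → W → Prop} {f : X → W}

/-- The variant of `IsCdPMorphism` that preserves truth over infinite frames, where the closures of
single fibres no longer determine the neighbourhood filters. The map need not be onto; its range is
closed under both relations. -/
structure IsCdInteriorMap [TopologicalSpace X] (R RD : W → W → Prop) (f : X → W) : Prop where
  map_nhds : ∀ x, map f (𝓝 x) = 𝓟 {w | R (f x) w}
  image_compl : ∀ x, f '' {x}ᶜ = {w | RD (f x) w}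

theorem IsCdInteriorMap.tsat_preimage_iff [TopologicalSpace X] (hf : IsCdInteriorMap R RD f)
    {θ : ℕ → Set W} {x : X} {A : BForm} :
    tsat (fun n => f ⁻¹' θ n) x A ↔ ksat R RD θ (f x) A := by
  induction A generalizing x with
  | var n => exact Iff.rfl
  | bot => exact Iff.rfl
  | imp A B ihA ihB => exact imp_congr ihA ihB
  | box A ih =>
    simp only [tsat_box_iff, ih]
    calc (∀ᶠ y in 𝓝 x, ksat R RD θ (f y) A) ↔ ∀ᶠ w in map f (𝓝 x), ksat R RD θ w A :=
          Iff.rfl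
      _ ↔ ∀ w, R (f x) w → ksat R RD θ w A := by rw [hf.map_nhds, eventually_principal]; rfl
  | dbox A ih =>
    simp only [tsat, ih]
    calc (∀ y, y ≠ x → ksat R RD θ (f y) A) ↔ ∀ w ∈ f '' {x}ᶜ, ksat R RD θ w A := by
          simp only [forall_mem_image, mem_compl_singleton_iff]
      _ ↔ ∀ w, RD (f x) w → ksat R RD θ w A := by rw [hf.image_compl]; rfl

theorem nhds_alexandrov [IsPreorder W R] (w : W) :
    @nhds W (alexandrov R) w = 𝓟 {v | R w v} := by
  let _ := alexandrov R
  refine le_antisymm (le_principal_iff.2 ?_) fun s hs => ?_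
  · have hopen : IsOpen {v | R w v} := fun _ hv _ hvu => trans_of R hv hvu
    exact hopen.mem_nhds (refl_of R w)
  · obtain ⟨U, hUs, hU, hwU⟩ := mem_nhds_iff.1 hs
    exact fun v hwv => hUs (hU hwU hwv)

theorem nhds_induced_alexandrov [IsPreorder W R] (x : X) :
    @nhds X ((alexandrov R).induced f) x = 𝓟 {y | R (f x) (f y)} := by
  rw [@nhds_induced _ _ (alexandrov R), nhds_alexandrov, comap_principal]
  rfl

theorem IsS4DFrame.isPreorder (hF : IsS4DFrame R RD) : IsPreorder W R where
  refl := hF.refl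
  trans _ _ _ hxy hyz := hF.trans hxy hyz

theorem IsS4DFrame.isCdInteriorMap_induced_alexandrov (hF : IsS4DFrame R RD)
    (hf : ∀ x, f '' {x}ᶜ = {w | RD (f x) w}) :
    @IsCdInteriorMap W X ((alexandrov R).induced f) R RD f := by
  let _ := (alexandrov R).induced f
  have := hF.isPreorder
  refine ⟨fun x => ?_, hf⟩
  rw [nhds_induced_alexandrov, map_principal]
  refine congrArg 𝓟 (Set.ext fun w => ⟨by rintro ⟨y, hy, rfl⟩; exact hy, fun hw => ?_⟩)
  rcases hF.inc hw with hRD | rfl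
  · obtain ⟨y, -, rfl⟩ := (hf x).ge hRD
    exact ⟨y, hw, rfl⟩
  · exact ⟨x, hw, rfl⟩

theorem IsDSFrame.exists_rel_and_drel (hDS : IsDSFrame R RD) (hF : IsS4DFrame R RD) (w : W) :
    ∃ v, R w v ∧ RD w v := by
  by_cases hw : RD w w
  · exact ⟨w, hF.refl w, hw⟩
  · obtain ⟨v, hne, hR⟩ := hDS w hw
    exact ⟨v, hR, (hF.inc hR).resolve_right hne.symm⟩

theorem IsDSFrame.not_isOpen_singleton (hDS : IsDSFrame R RD) (hF : IsS4DFrame R RD)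
    {x : X} (hx : {w | RD (f x) w} ⊆ f '' {x}ᶜ) :
    ¬ IsOpen[(alexandrov R).induced f] {x} := by
  let _ := (alexandrov R).induced f
  have := hF.isPreorder
  intro hopen
  obtain ⟨v, hR, hRD⟩ := hDS.exists_rel_and_drel hF (f x)
  obtain ⟨y, hne, rfl⟩ := hx hRD
  have hnhds : {x} ∈ 𝓝 x := hopen.mem_nhds rfl
  rw [nhds_induced_alexandrov, mem_principal] at hnhds
  exact hne (hnhds hR)

end Transfer

section Doubling

variable {W : Type} {R RD : W → W → Prop} {s : Set W} {w₀ w v : W}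

/-- The equivalence class of `w₀` under `R_D ∪ Id`. -/
def dCluster (RD : W → W → Prop) (w₀ : W) : Set W :=
  insert w₀ {w | RD w₀ w}

theorem IsS4DFrame.mem_dCluster_of_drel (hF : IsS4DFrame R RD) (hw : w ∈ dCluster RD w₀)
    (h : RD w v) : v ∈ dCluster RD w₀ := by
  rcases hw with rfl | hw
  · exact .inr h
  · exact (eq_or_ne v w₀).imp_right fun hne => hF.ptrans hw h hne.symm

theorem IsS4DFrame.pairwise_dCluster (hF : IsS4DFrame R RD) : (dCluster RD w₀).Pairwise RD := by
  rintro w (rfl | hw) v (rfl | hv) hne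
  · exact (hne rfl).elim
  · exact hv
  · exact hF.symm hw
  · exact hF.ptrans (hF.symm hw) hv hne

/-- The projection to the frame from the set of points of `s` with a second copy of each
`R_D`-reflexive one. -/
def doublingProj (RD : W → W → Prop) (s : Set W) : s ⊕ {w : s // RD w w} → W :=
  Sum.elim Subtype.val fun w => w.1

theorem doublingProj_mem (x : s ⊕ {w : s // RD w w}) : doublingProj RD s x ∈ s :=
  x.rec Subtype.property fun w => w.1.2

theorem drel_doublingProj_of_ne (hs : s.Pairwise RD) {x y : s ⊕ {w : s // RD w w}} (hne : y ≠ x) :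
    RD (doublingProj RD s x) (doublingProj RD s y) := by
  by_cases hfib : doublingProj RD s x = doublingProj RD s y
  · -- Of two points in one fibre, one is a second copy, so they lie over a reflexive point.
    rcases x with x | x
    · rcases y with y | y
      · exact (hne (congrArg Sum.inl (Subtype.ext hfib.symm))).elim
      · rw [hfib]
        exact y.2
    · rw [← hfib]
      exact x.2
  · exact hs (doublingProj_mem x) (doublingProj_mem y) hfib

theorem exists_ne_doublingProj_eq (hcl : ∀ ⦃w v⦄, w ∈ s → RD w v → v ∈ s)
    {x : s ⊕ {w : s // RD w w}} (h : RD (doublingProj RD s x) v) :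
    ∃ y ≠ x, doublingProj RD s y = v := by
  have hv : v ∈ s := hcl (doublingProj_mem x) h
  by_cases hx : x = .inl ⟨v, hv⟩
  · subst hx
    exact ⟨.inr ⟨⟨v, hv⟩, h⟩, Sum.inr_ne_inl, rfl⟩
  · exact ⟨.inl ⟨v, hv⟩, Ne.symm hx, rfl⟩

theorem doublingProj_image_compl (hs : s.Pairwise RD) (hcl : ∀ ⦃w v⦄, w ∈ s → RD w v → v ∈ s)
    (x : s ⊕ {w : s // RD w w}) :
    doublingProj RD s '' {x}ᶜ = {v | RD (doublingProj RD s x) v} := by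
  refine Subset.antisymm ?_ fun v hv => exists_ne_doublingProj_eq hcl hv
  rintro _ ⟨y, hne, rfl⟩
  exact drel_doublingProj_of_ne hs hne

theorem exists_isCdInteriorMap_denseInItself (hF : IsS4DFrame R RD) (hDS : IsDSFrame R RD)
    (w₀ : W) :
    ∃ (X : Type) (_ : TopologicalSpace X) (f : X → W),
      IsCdInteriorMap R RD f ∧ (∀ x : X, ¬ IsOpen {x}) ∧ w₀ ∈ range f := by
  have himage := doublingProj_image_compl (hF.pairwise_dCluster (w₀ := w₀))
    fun _ _ => hF.mem_dCluster_of_drel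
  exact ⟨_, (alexandrov R).induced _, doublingProj RD (dCluster RD w₀),
    hF.isCdInteriorMap_induced_alexandrov himage,
    fun x => hDS.not_isOpen_singleton hF (himage x).ge, .inl ⟨w₀, .inl rfl⟩, rfl⟩

end Doubling

theorem kvalid_of_forall_tvalid {W : Type} {R RD : W → W → Prop} {A : BForm}
    (hF : IsS4DFrame R RD) (hDS : IsDSFrame R RD)
    (h : ∀ (X : Type) [TopologicalSpace X], (∀ x : X, ¬ IsOpen ({x} : Set X)) → tvalid X A) :
    kvalid R RD A := by
  intro θ w
  obtain ⟨X, _, f, hf, hX, x, rfl⟩ := exists_isCdInteriorMap_denseInItself hF hDS w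
  exact hf.tsat_preimage_iff.1 (h X hX _ x)

/-- topological completeness of S4DS: `A ∈ S4DS` iff `A` is valid
in every dense-in-itself topological space. -/
theorem s4ds_topological_completeness (A : BForm) :
    S4DS A ↔ ∀ (X : Type) [TopologicalSpace X],
      (∀ x : X, ¬ IsOpen ({x} : Set X)) → tvalid X A := by
  refine ⟨fun h X _ hX => h.tvalid ?_, fun h => s4ds_of_forall_kvalid fun W R RD hF hDS => ?_⟩
  · rintro _ rfl
    exact tvalid_dsAx hX
  · exact kvalid_of_forall_tvalid hF hDS h
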